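/- arXiv:1906.01773 — 3 statements merged into one kernel-verified Lean document; each statement's English description precedes it below -/
import Mathlib

section
/- There exists a polyomino M — a finite, edge-connected set of exactly 100 unit cells of ℤ² — such that ℤ² can be partitioned into translates of M, and the adjacency graph of this tessellation (whose vertices are the translates of M, with two translates adjacent if and only if some cell of one is edge-adjacent to a cell of the other) is isomorphic to the triangular grid graph G_Δ; in particular, every macrotile in the tessellation has exactly six neighbors, arranged as the neighborhood of a node in G_Δ. -/
/-!
There is a 100-cell polyomino whose translates tessellate `ℤ²` with tessellation
adjacency graph isomorphic to the triangular grid graph `G_Δ`.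
-/

/-- Edge-adjacency of unit cells of `ℤ²`. -/
def cellAdj (c d : ℤ × ℤ) : Prop :=
  c - d ∈ ({(1, 0), (-1, 0), (0, 1), (0, -1)} : Finset (ℤ × ℤ))

/-- Adjacency in the triangular grid graph `G_Δ` on `ℤ²`. -/
def triAdj (u v : ℤ × ℤ) : Prop :=
  u - v ∈ ({(1, 0), (-1, 0), (0, 1), (0, -1), (1, -1), (-1, 1)} : Finset (ℤ × ℤ))

/-- A polyomino: a nonempty finite set of cells, connected under edge-adjacency. -/
def IsPolyomino (M : Finset (ℤ × ℤ)) : Prop :=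
  M.Nonempty ∧ ∀ c ∈ M, ∀ d ∈ M,
    Relation.ReflTransGen (fun x y => x ∈ M ∧ y ∈ M ∧ cellAdj x y) c d

/-- The `10 × 10` square is a polyomino. -/
theorem square_polyomino :
    IsPolyomino (Finset.Ico (0:ℤ) 10 ×ˢ Finset.Ico (0:ℤ) 10) := by
  have hM : ∀ x y : ℤ, (x, y) ∈ (Finset.Ico (0:ℤ) 10 ×ˢ Finset.Ico (0:ℤ) 10) ↔
      (0 ≤ x ∧ x < 10) ∧ (0 ≤ y ∧ y < 10) := by
    intro x y
    simp [Finset.mem_product]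
  refine ⟨⟨(0, 0), by rw [hM]; omega⟩, ?_⟩
  generalize hS : (Finset.Ico (0:ℤ) 10 ×ˢ Finset.Ico (0:ℤ) 10) = M at *
  have hsymm : ∀ c d, Relation.ReflTransGen (fun x y => x ∈ M ∧ y ∈ M ∧ cellAdj x y) c d →
      Relation.ReflTransGen (fun x y => x ∈ M ∧ y ∈ M ∧ cellAdj x y) d c := by
    intro c d h
    induction h with
    | refl => exact Relation.ReflTransGen.refl
    | tail _ hstep ih =>
      refine Relation.ReflTransGen.head ⟨hstep.2.1, hstep.1, ?_⟩ ih
      have h3 := hstep.2.2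
      simp only [cellAdj, Finset.mem_insert, Finset.mem_singleton, Prod.ext_iff,
        Prod.fst_sub, Prod.snd_sub] at h3 ⊢
      omega
  have hrow : ∀ n : ℕ, n < 10 →
      Relation.ReflTransGen (fun x y => x ∈ M ∧ y ∈ M ∧ cellAdj x y) (0, 0) ((n : ℤ), 0) := by
    intro n
    induction n with
    | zero => intro _; exact Relation.ReflTransGen.refl
    | succ k ih =>
      intro hk
      refine (ih (by omega)).tail ⟨(hM _ _).2 (by omega), (hM _ _).2 (by omega), ?_⟩
      simp [cellAdj]
  have hcol : ∀ n m : ℕ, n < 10 → m < 10 →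
      Relation.ReflTransGen (fun x y => x ∈ M ∧ y ∈ M ∧ cellAdj x y) (0, 0)
        ((n : ℤ), (m : ℤ)) := by
    intro n m hn
    induction m with
    | zero => intro _; exact hrow n hn
    | succ k ih =>
      intro hk
      refine (ih (by omega)).tail ⟨(hM _ _).2 (by omega), (hM _ _).2 (by omega), ?_⟩
      simp [cellAdj]
  have hall : ∀ c ∈ M,
      Relation.ReflTransGen (fun x y => x ∈ M ∧ y ∈ M ∧ cellAdj x y) (0, 0) c := by
    rintro ⟨x, y⟩ hc
    rw [hM] at hc
    have := hcol x.toNat y.toNat (by omega) (by omega)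
    rwa [Int.toNat_of_nonneg hc.1.1, Int.toNat_of_nonneg hc.2.1] at this
  intro c hc d hd
  exact (hsymm _ _ (hall c hc)).trans (hall d hd)

/-- There exists a polyomino `M` of exactly 100 cells together with a placement
`pos : ℤ² → ℤ²` of one translate of `M` for each node of `G_Δ` such that the
translates partition `ℤ²` and two distinct translates contain edge-adjacent cells
exactly when the corresponding nodes are adjacent in `G_Δ`; in particular every
macrotile of the tessellation has exactly six neighbors, arranged as the
neighborhood of a node of `G_Δ`. -/
theorem exists_100_cell_macrotile_tessellation_triangular :
    ∃ (M : Finset (ℤ × ℤ)) (pos : ℤ × ℤ → ℤ × ℤ),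
      M.card = 100 ∧ IsPolyomino M ∧
      -- the translates `pos v + M` partition `ℤ²`
      (∀ x : ℤ × ℤ, ∃! v : ℤ × ℤ, ∃ c ∈ M, x = pos v + c) ∧
      -- the adjacency graph of the tessellation is (via the indexing `v ↦ pos v + M`)
      -- isomorphic to the triangular grid graph `G_Δ`
      (∀ v w : ℤ × ℤ, v ≠ w →
        ((∃ c ∈ M, ∃ d ∈ M, cellAdj (pos v + c) (pos w + d)) ↔ triAdj v w)) := by
  have hM : ∀ x y : ℤ, (x, y) ∈ (Finset.Ico (0:ℤ) 10 ×ˢ Finset.Ico (0:ℤ) 10) ↔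
      (0 ≤ x ∧ x < 10) ∧ (0 ≤ y ∧ y < 10) := by
    intro x y
    simp [Finset.mem_product]
  refine ⟨Finset.Ico (0:ℤ) 10 ×ˢ Finset.Ico (0:ℤ) 10,
    fun v => (10 * v.1 + 5 * v.2, 10 * v.2), by simp, square_polyomino, ?_, ?_⟩
  · rintro ⟨x, y⟩
    refine ⟨((x - 5 * (y / 10)) / 10, y / 10),
      ⟨((x - 5 * (y / 10)) % 10, y % 10), ?_, ?_⟩, ?_⟩
    · rw [hM]; omega
    · simp only [Prod.mk_add_mk, Prod.mk.injEq]; omega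
    · rintro ⟨a, b⟩ ⟨⟨c, d⟩, hc, h⟩
      rw [hM] at hc
      simp only [Prod.mk_add_mk, Prod.mk.injEq] at h ⊢
      omega
  · rintro ⟨a, b⟩ ⟨a', b'⟩ hne
    simp only [ne_eq, Prod.mk.injEq] at hne
    constructor
    · rintro ⟨⟨c, d⟩, hc, ⟨e, f⟩, he, h⟩
      rw [hM] at hc he
      simp only [cellAdj, triAdj, Prod.mk_add_mk, Prod.mk_sub_mk, Finset.mem_insert,
        Finset.mem_singleton, Prod.mk.injEq] at h ⊢
      omega
    · intro h
      simp only [triAdj, Prod.mk_sub_mk, Finset.mem_insert,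
        Finset.mem_singleton, Prod.mk.injEq] at h
      have key : ∃ c d e f : ℤ, ((0 ≤ c ∧ c < 10) ∧ (0 ≤ d ∧ d < 10)) ∧
          ((0 ≤ e ∧ e < 10) ∧ (0 ≤ f ∧ f < 10)) ∧
          cellAdj ((10 * a + 5 * b, 10 * b) + (c, d)) ((10 * a' + 5 * b', 10 * b') + (e, f)) := by
        simp only [cellAdj, Prod.mk_add_mk, Prod.mk_sub_mk, Finset.mem_insert,
          Finset.mem_singleton, Prod.mk.injEq]
        rcases h with h | h | h | h | h | h
        · exact ⟨0, 0, 9, 0, by omega, by omega, by omega⟩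
        · exact ⟨9, 0, 0, 0, by omega, by omega, by omega⟩
        · exact ⟨0, 0, 5, 9, by omega, by omega, by omega⟩
        · exact ⟨5, 9, 0, 0, by omega, by omega, by omega⟩
        · exact ⟨0, 9, 5, 0, by omega, by omega, by omega⟩
        · exact ⟨5, 0, 0, 9, by omega, by omega, by omega⟩
      obtain ⟨c, d, e, f, hc, he, hadj⟩ := key
      exact ⟨(c, d), (hM c d).2 hc, (e, f), (hM e f).2 he, hadj⟩
end

section
/- Let τ be a positive integer and let G be a finite graph with nonnegative integer edge weights whose vertex set is partitioned into nonempty sets A and B such that: (i) every bipartition of A into two nonempty parts has total weight of A-internal edges crossing it at least τ; (ii) the same holds for B; and (iii) the total weight of edges between A and B is at least τ. Then every bipartition of the vertex set of G into two nonempty parts has total crossing edge weight at least τ, i.e., G has min-cut at least τ. Consequently, in the Tile Automata model, if two τ-stable assemblies are τ-combinable into an assembly C, then C is τ-stable. -/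
namespace TA

/-- A positioned assembly: a finitely supported partial placement of tile states
on the square lattice `ℤ²`. -/
structure PosAsm (S : Type) where
  tiles : ℤ × ℤ → Option S
  finite : {x : ℤ × ℤ | tiles x ≠ none}.Finite

/-- The domain (set of occupied positions) of a positioned assembly. -/
def dom {S : Type} (α : PosAsm S) : Set (ℤ × ℤ) := {x | α.tiles x ≠ none}

/-- A Tile Automata system `Γ = (Σ_Γ, Π, Λ, Δ, τ)` over an alphabet `S` of tile
states.  `aff s₁ s₂ true` is the affinity strength of `s₁` immediately to the west
of `s₂` (orientation `⊢`), `aff s₁ s₂ false` that of `s₁` immediately above `s₂`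
(orientation `⊥`).  `rules` is the set of transition rules
`(s₁ᵃ, s₂ᵃ, s₁ᵇ, s₂ᵇ, d)`, `seeds` the set of initial assemblies and `τ` the
stability threshold. -/
structure System (S : Type) where
  aff : S → S → Bool → ℕ
  rules : Set (S × S × S × S × Bool)
  seeds : Set (PosAsm S)
  τ : ℕ

variable {S : Type}

/-- The weight in the bond graph of `α` of the edge between positions `u` and `v`
(`0` unless both are occupied and adjacent). -/
def edgeW (Γ : System S) (α : PosAsm S) (u v : ℤ × ℤ) : ℕ :=
  match α.tiles u, α.tiles v with
  | some a, some b =>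
    if v = u + (1, 0) then Γ.aff a b true
    else if u = v + (1, 0) then Γ.aff b a true
    else if u = v + (0, 1) then Γ.aff a b false
    else if v = u + (0, 1) then Γ.aff b a false
    else 0
  | _, _ => 0

/-- The total strength of the bonds of `α` crossing from `A` to `B`. -/
noncomputable def crossW (Γ : System S) (α : PosAsm S) (A B : Set (ℤ × ℤ)) : ℕ :=
  ∑ᶠ u ∈ A, ∑ᶠ v ∈ B, edgeW Γ α u v

/-- `α` is `τ`-stable: every bipartition of its tiles has crossing bond strength
at least `τ` (its bond graph has min-cut at least `τ`). -/
def Stable (Γ : System S) (α : PosAsm S) : Prop :=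
  ∀ X : Set (ℤ × ℤ), (dom α ∩ X).Nonempty → (dom α \ X).Nonempty →
    Γ.τ ≤ crossW Γ α X Xᶜ

/-- The union of two positioned assemblies (used for disjoint domains). -/
def union (α β : PosAsm S) : PosAsm S where
  tiles x := match α.tiles x with
    | some a => some a
    | none => β.tiles x
  finite := by
    apply (α.finite.union β.finite).subset
    intro x hx
    simp only [Set.mem_setOf_eq, Set.mem_union]
    by_cases h : α.tiles x = none
    · right
      simp only [Set.mem_setOf_eq, h] at hx
      exact hx
    · exact Or.inl h

/-- Grid (edge) adjacency on `ℤ²`. -/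
def gridAdj (u v : ℤ × ℤ) : Prop :=
  v - u ∈ ({(1, 0), (-1, 0), (0, 1), (0, -1)} : Finset (ℤ × ℤ))

/-- A positioned assembly is connected (as required of assemblies). -/
def IsConnected (α : PosAsm S) : Prop :=
  ∀ u ∈ dom α, ∀ v ∈ dom α,
    Relation.ReflTransGen (fun x y => x ∈ dom α ∧ y ∈ dom α ∧ gridAdj x y) u v

/-- `α` and `β` are `τ`-combinable into `γ`: they have disjoint domains, `γ` is
their union, and they attach along a border of total affinity strength at least `τ`. -/
def Combines (Γ : System S) (α β γ : PosAsm S) : Prop :=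
  Disjoint (dom α) (dom β) ∧ γ = union α β ∧
    Γ.τ ≤ crossW Γ γ (dom α) (dom β)

/-- `γ` is `τ`-breakable into the pieces `α` and `β`: it splits along a cut of
total affinity strength less than `τ`. -/
def BreaksInto (Γ : System S) (γ α β : PosAsm S) : Prop :=
  Disjoint (dom α) (dom β) ∧ γ = union α β ∧
    (dom α).Nonempty ∧ (dom β).Nonempty ∧
    crossW Γ γ (dom α) (dom β) < Γ.τ

/-- `α` is transitionable into `β`: some adjacent pair of tiles matches a
transition rule, whose output states replace them. -/
def Transitions (Γ : System S) (α β : PosAsm S) : Prop :=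
  ∃ (u v : ℤ × ℤ) (a b c d : S) (horiz : Bool),
    ((horiz = true ∧ v = u + (1, 0)) ∨ (horiz = false ∧ v = u + (0, -1))) ∧
    α.tiles u = some a ∧ α.tiles v = some b ∧
    (a, b, c, d, horiz) ∈ Γ.rules ∧
    β.tiles = Function.update (Function.update α.tiles u (some c)) v (some d)

/-- Translation of a positioned assembly. -/
def translate (t : ℤ × ℤ) (α : PosAsm S) : PosAsm S where
  tiles x := α.tiles (x - t)
  finite := by
    apply (α.finite.image (fun y => y + t)).subset
    intro x hx
    exact ⟨x - t, hx, by ring⟩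

/-- The producible assemblies of a Tile Automata system: generated from the
initial assemblies (closed under translation) by transitions, `τ`-combinations
and `τ`-breaks. -/
inductive Producible (Γ : System S) : PosAsm S → Prop
  | seed {α : PosAsm S} : α ∈ Γ.seeds → Producible Γ α
  | translate {α : PosAsm S} (t : ℤ × ℤ) : Producible Γ α → Producible Γ (TA.translate t α)
  | transition {α β : PosAsm S} : Producible Γ α → Transitions Γ α β → Producible Γ β
  | combine {α β γ : PosAsm S} :
      Producible Γ α → Producible Γ β → Combines Γ α β γ → Producible Γ γ
  | breakL {γ α β : PosAsm S} : Producible Γ γ → BreaksInto Γ γ α β → Producible Γ α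
  | breakR {γ α β : PosAsm S} : Producible Γ γ → BreaksInto Γ γ α β → Producible Γ β

/-- One step of `Γ`: a single transition, combination with a producible assembly,
or break. -/
def Step (Γ : System S) (α β : PosAsm S) : Prop :=
  Transitions Γ α β ∨
    (∃ δ, Producible Γ δ ∧ (Combines Γ α δ β ∨ Combines Γ δ α β)) ∨
    (∃ δ, BreaksInto Γ α β δ ∨ BreaksInto Γ α δ β)

/-- `α →^Γ β`: `α` may become `β` through a sequence of combinations, transitions
and/or breaks. -/
def StepsTo (Γ : System S) : PosAsm S → PosAsm S → Prop :=
  Relation.ReflTransGen (Step Γ)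

end TA



/-- The graph-theoretic claim: if the vertex set of a finite graph with
nonnegative integer edge weights `w` is partitioned into nonempty sets `A` and
`B` such that every bipartition of `A` has `A`-internal crossing weight at least
`τ`, likewise for `B`, and the total weight between `A` and `B` is at least `τ`,
then every bipartition of the whole vertex set has crossing weight at least `τ`,
i.e. the graph has min-cut at least `τ`. -/
def GraphMinCutOfPartitionClaim : Prop :=
  ∀ (V : Type) [Fintype V] [DecidableEq V] (τ : ℕ), 0 < τ →
    ∀ w : V → V → ℕ, (∀ u v : V, w u v = w v u) →
    ∀ A B : Finset V, A.Nonempty → B.Nonempty → Disjoint A B → A ∪ B = Finset.univ →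
    (∀ X ⊆ A, X.Nonempty → (A \ X).Nonempty → τ ≤ ∑ u ∈ X, ∑ v ∈ A \ X, w u v) →
    (∀ X ⊆ B, X.Nonempty → (B \ X).Nonempty → τ ≤ ∑ u ∈ X, ∑ v ∈ B \ X, w u v) →
    τ ≤ (∑ u ∈ A, ∑ v ∈ B, w u v) →
    ∀ X : Finset V, X.Nonempty → Xᶜ.Nonempty → τ ≤ ∑ u ∈ X, ∑ v ∈ Xᶜ, w u v

/-- The consequence in the Tile Automata model: if two `τ`-stable assemblies are
`τ`-combinable into an assembly `C`, then `C` is `τ`-stable. -/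
def CombinableStableClaim : Prop :=
  ∀ (S : Type) (Γ : TA.System S), 0 < Γ.τ →
    ∀ α β γ : TA.PosAsm S,
      TA.Stable Γ α → TA.Stable Γ β → TA.Combines Γ α β γ → TA.Stable Γ γ

theorem sum_mono_aux {V : Type} (w : V → V → ℕ) {A A' B B' : Finset V}
    (hA : A ⊆ A') (hB : B ⊆ B') :
    ∑ u ∈ A, ∑ v ∈ B, w u v ≤ ∑ u ∈ A', ∑ v ∈ B', w u v :=
  (Finset.sum_le_sum fun _ _ => Finset.sum_le_sum_of_subset hB).trans
    (Finset.sum_le_sum_of_subset hA)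

theorem graph_claim : GraphMinCutOfPartitionClaim := by
  intro V _ _ τ _ w hw A B _ _ _ hAB hA hB hX X hX1 hX2
  have key : ∀ C : Finset V,
      (∀ X ⊆ C, X.Nonempty → (C \ X).Nonempty → τ ≤ ∑ u ∈ X, ∑ v ∈ C \ X, w u v) →
      τ ≤ (∑ u ∈ X, ∑ v ∈ Xᶜ, w u v) ∨ C ⊆ X ∨ C ⊆ Xᶜ := by
    intro C hC
    by_cases h1 : (C ∩ X).Nonempty
    · by_cases h2 : (C \ (C ∩ X)).Nonempty
      · left
        refine (hC _ Finset.inter_subset_left h1 h2).trans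
          (sum_mono_aux w Finset.inter_subset_right ?_)
        intro x hx
        simp at hx ⊢
        tauto
      · right; left
        intro x hx
        by_contra h
        exact h2 ⟨x, by simp [hx, h]⟩
    · right; right
      intro x hx
      simp only [Finset.mem_compl]
      intro h
      exact h1 ⟨x, by simp [hx, h]⟩
  have hall : ∀ x, x ∈ A ∨ x ∈ B := fun x => by
    have : x ∈ A ∪ B := hAB ▸ Finset.mem_univ x
    simpa using this
  obtain ⟨x, hx⟩ := hX1
  obtain ⟨y, hy⟩ := hX2
  rcases key A hA with h | hA' | hA'
  · exact h
  · rcases key B hB with h | hB' | hB'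
    · exact h
    · exact absurd ((hall y).elim (fun h => hA' h) (fun h => hB' h)) (Finset.mem_compl.1 hy)
    · exact hX.trans (sum_mono_aux w hA' hB')
  · rcases key B hB with h | hB' | hB'
    · exact h
    · rw [Finset.sum_comm] at hX
      have e : ∑ u ∈ B, ∑ v ∈ A, w v u = ∑ u ∈ B, ∑ v ∈ A, w u v :=
        Finset.sum_congr rfl fun u _ => Finset.sum_congr rfl fun v _ => hw v u
      exact (hX.trans e.le).trans (sum_mono_aux w hB' hA')
    · exact absurd hx (Finset.mem_compl.1 ((hall x).elim (fun h => hA' h) (fun h => hB' h)))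

namespace TA

theorem edgeW_none_left {S : Type} (Γ : System S) (α : PosAsm S) (u v : ℤ × ℤ) (h : u ∉ dom α) :
    edgeW Γ α u v = 0 := by
  have h : α.tiles u = none := by simpa [dom] using h
  simp [edgeW, h]

theorem edgeW_none_right {S : Type} (Γ : System S) (α : PosAsm S) (u v : ℤ × ℤ) (h : v ∉ dom α) :
    edgeW Γ α u v = 0 := by
  have h : α.tiles v = none := by simpa [dom] using h
  simp [edgeW, h]

theorem edgeW_symm {S : Type} (Γ : System S) (α : PosAsm S) (u v : ℤ × ℤ) :
    edgeW Γ α u v = edgeW Γ α v u := by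
  obtain ⟨a, b⟩ := u
  obtain ⟨c, d⟩ := v
  unfold edgeW
  cases α.tiles (a, b) <;> cases α.tiles (c, d) <;> simp only [Prod.mk_add_mk, Prod.mk.injEq]
  split_ifs <;> first | rfl | omega

open Classical in
theorem crossW_eq {S : Type} (Γ : System S) (α : PosAsm S) (A B : Set (ℤ × ℤ)) (F : Finset (ℤ × ℤ))
    (hF : dom α ⊆ F) :
    crossW Γ α A B = ∑ u ∈ F.filter (· ∈ A), ∑ v ∈ F.filter (· ∈ B), edgeW Γ α u v := by
  have inner : ∀ u, ∑ᶠ v ∈ B, edgeW Γ α u v = ∑ v ∈ F.filter (· ∈ B), edgeW Γ α u v := by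
    intro u
    apply finsum_mem_eq_sum_of_inter_support_eq
    ext v
    simp only [Set.mem_inter_iff, Function.mem_support, Finset.coe_filter, Set.mem_setOf_eq]
    have : edgeW Γ α u v ≠ 0 → v ∈ F := fun h => by
      by_contra h'
      exact h (edgeW_none_right Γ α u v fun h2 => h' (hF h2))
    tauto
  unfold crossW
  simp only [inner]
  apply finsum_mem_eq_sum_of_inter_support_eq
  ext u
  simp only [Set.mem_inter_iff, Function.mem_support, Finset.coe_filter, Set.mem_setOf_eq]
  have : ∑ v ∈ F.filter (· ∈ B), edgeW Γ α u v ≠ 0 → u ∈ F := fun h => by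
    by_contra h'
    exact h (Finset.sum_eq_zero fun v _ => edgeW_none_left Γ α u v fun h2 => h' (hF h2))
  tauto

theorem crossW_mono {S : Type} (Γ : System S) (α γ : PosAsm S) {A A' B B' : Set (ℤ × ℤ)}
    (h : ∀ u v, edgeW Γ α u v ≤ edgeW Γ γ u v) (hA : A ⊆ A') (hB : B ⊆ B') :
    crossW Γ α A B ≤ crossW Γ γ A' B' := by
  classical
  have hf : (dom α ∪ dom γ).Finite := α.finite.union γ.finite
  rw [crossW_eq Γ α A B hf.toFinset (by simp), crossW_eq Γ γ A' B' hf.toFinset (by simp)]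
  refine le_trans (Finset.sum_le_sum fun u _ => Finset.sum_le_sum fun v _ => h u v) ?_
  exact sum_mono_aux _ (Finset.monotone_filter_right _ fun x _ hx => hA hx)
    (Finset.monotone_filter_right _ fun x _ hx => hB hx)

theorem crossW_symm {S : Type} (Γ : System S) (α : PosAsm S) (A B : Set (ℤ × ℤ)) :
    crossW Γ α A B = crossW Γ α B A := by
  classical
  have hf : (dom α).Finite := α.finite
  rw [crossW_eq Γ α A B hf.toFinset (by simp), crossW_eq Γ α B A hf.toFinset (by simp),
    Finset.sum_comm]
  exact Finset.sum_congr rfl fun u _ => Finset.sum_congr rfl fun v _ => edgeW_symm Γ α v u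

theorem edgeW_le {S : Type} (Γ : System S) (α γ : PosAsm S)
    (h : ∀ x ∈ dom α, γ.tiles x = α.tiles x) (u v : ℤ × ℤ) :
    edgeW Γ α u v ≤ edgeW Γ γ u v := by
  by_cases hu : u ∈ dom α
  · by_cases hv : v ∈ dom α
    · unfold edgeW
      rw [h u hu, h v hv]
    · simp [edgeW_none_right Γ α u v hv]
  · simp [edgeW_none_left Γ α u v hu]

theorem combine_claim : CombinableStableClaim := by
  rintro S Γ _ α β γ hα hβ ⟨hd, rfl, hc⟩ X ⟨x, hx, hxX⟩ ⟨y, hy, hyX⟩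
  have eα : ∀ x ∈ dom α, (union α β).tiles x = α.tiles x := by
    intro x hx
    obtain ⟨a, ha⟩ := Option.ne_none_iff_exists'.1 hx
    simp [union, ha]
  have eβ : ∀ x ∈ dom β, (union α β).tiles x = β.tiles x := by
    intro x hx
    have h : x ∉ dom α := fun h => Set.disjoint_left.1 hd h hx
    have h : α.tiles x = none := by simpa [dom] using h
    simp [union, h]
  have key : ∀ δ : PosAsm S, Stable Γ δ → (∀ x ∈ dom δ, (union α β).tiles x = δ.tiles x) →
      Γ.τ ≤ crossW Γ (union α β) X Xᶜ ∨ dom δ ⊆ X ∨ dom δ ⊆ Xᶜ := by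
    intro δ hδ e
    by_cases h1 : (dom δ ∩ X).Nonempty
    · by_cases h2 : (dom δ \ X).Nonempty
      · exact Or.inl ((hδ X h1 h2).trans
          (crossW_mono Γ δ _ (edgeW_le Γ δ _ e) subset_rfl subset_rfl))
      · right; left
        intro x hx
        by_contra h
        exact h2 ⟨x, hx, h⟩
    · right; right
      intro x hx h
      exact h1 ⟨x, hx, h⟩
  have hall : ∀ x ∈ dom (union α β), x ∈ dom α ∨ x ∈ dom β := by
    intro x hx
    by_contra! h
    have h1 : α.tiles x = none := by simpa [dom] using h.1
    have h2 : β.tiles x = none := by simpa [dom] using h.2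
    exact hx (by simp [union, h1, h2])
  rcases key α hα eα with h | hA' | hA'
  · exact h
  · rcases key β hβ eβ with h | hB' | hB'
    · exact h
    · exact absurd ((hall y hy).elim (fun h => hA' h) (fun h => hB' h)) hyX
    · exact hc.trans (crossW_mono Γ _ _ (fun _ _ => le_rfl) hA' hB')
  · rcases key β hβ eβ with h | hB' | hB'
    · exact h
    · rw [crossW_symm] at hc
      exact hc.trans (crossW_mono Γ _ _ (fun _ _ => le_rfl) hB' hA')
    · exact absurd hxX ((hall x hx).elim (fun h => hA' h) (fun h => hB' h))

end TA

theorem mincut_of_combination :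
    GraphMinCutOfPartitionClaim ∧ CombinableStableClaim := by
  exact ⟨graph_claim, TA.combine_claim⟩
end

section
/- Let G be a finite connected graph with nonnegative edge weights and let τ > 0. If G admits a bipartition of its vertex set into two nonempty parts with total crossing edge weight less than τ, then G admits such a bipartition (X, Y) with crossing weight less than τ in which, additionally, the induced subgraphs on X and on Y are both connected. Consequently, in the Tile Automata model, every τ-breakable assembly can be broken along a cut of strength less than τ into two pieces each of which is a connected assembly. -/
/-- The graph-theoretic claim: in a finite connected graph `G` with nonnegative
integer edge weights `w` (vanishing off the edges of `G`), if some bipartition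
of the vertex set into two nonempty parts has crossing weight less than `τ`,
then there is such a bipartition `(X, Xᶜ)` of crossing weight less than `τ` in
which the induced subgraphs on both `X` and `Xᶜ` are connected. -/
def BreakIntoConnectedPiecesGraphClaim : Prop :=
  ∀ (V : Type) [Fintype V] [DecidableEq V] (G : SimpleGraph V) (w : V → V → ℕ) (τ : ℕ),
    0 < τ → G.Connected →
    (∀ u v : V, w u v = w v u) →
    (∀ u v : V, ¬ G.Adj u v → w u v = 0) →
    (∃ X : Finset V, X.Nonempty ∧ Xᶜ.Nonempty ∧ ∑ u ∈ X, ∑ v ∈ Xᶜ, w u v < τ) →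
    ∃ X : Finset V, X.Nonempty ∧ Xᶜ.Nonempty ∧ (∑ u ∈ X, ∑ v ∈ Xᶜ, w u v < τ) ∧
      (G.induce (X : Set V)).Connected ∧ (G.induce ((Xᶜ : Finset V) : Set V)).Connected

/-- The consequence in the Tile Automata model: every `τ`-breakable (connected)
assembly can be broken along a cut of strength less than `τ` into two pieces,
each of which is a connected assembly. -/
def BreakIntoConnectedPiecesTAClaim : Prop :=
  ∀ (S : Type) (Γ : TA.System S), 0 < Γ.τ →
    ∀ γ : TA.PosAsm S, TA.IsConnected γ →
      (∃ α β : TA.PosAsm S, TA.BreaksInto Γ γ α β) →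
      ∃ α β : TA.PosAsm S, TA.BreaksInto Γ γ α β ∧
        TA.IsConnected α ∧ TA.IsConnected β

section Helpers

/-- Grow a connected vertex set inside `X` until no edge leaves it within `X`. -/
theorem exists_closed_connected {V : Type} [Fintype V] [DecidableEq V] (G : SimpleGraph V)
    (A X : Finset V) (hAX : A ⊆ X) (hA : (G.induce (A : Set V)).Connected) :
    ∃ C : Finset V, A ⊆ C ∧ C ⊆ X ∧ (G.induce (C : Set V)).Connected ∧
      ∀ u ∈ C, ∀ v ∈ X, G.Adj u v → v ∈ C := by
  classical
  obtain ⟨C, hAC, hC⟩ := (Set.toFinite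
    {C : Finset V | C ⊆ X ∧ (G.induce (C : Set V)).Connected}).exists_le_maximal
    (show A ∈ _ from ⟨hAX, hA⟩)
  refine ⟨C, hAC, hC.prop.1, hC.prop.2, ?_⟩
  intro u hu v hv huv
  have hconn : (G.induce ((insert v C : Finset V) : Set V)).Connected := by
    have h := SimpleGraph.induce_union_connected hC.prop.2.preconnected
      (SimpleGraph.induce_pair_connected_of_adj huv).preconnected ⟨u, hu, by simp⟩
    have he : ((insert v C : Finset V) : Set V) = (C : Set V) ∪ {u, v} := by
      ext x
      simp only [Finset.coe_insert, Set.mem_insert_iff, Set.mem_union, Finset.mem_coe,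
        Set.mem_singleton_iff]
      constructor
      · tauto
      · rintro (h | rfl | h) <;> tauto
    rw [he]
    exact h
  have := hC.le_of_ge (y := insert v C) ⟨Finset.insert_subset hv hC.prop.1, hconn⟩
    (Finset.subset_insert v C)
  exact this (Finset.mem_insert_self v C)

/-- Passing to an edge-closed subset does not increase the cut. -/
theorem cut_le_of_closed {V : Type} [Fintype V] [DecidableEq V] (G : SimpleGraph V)
    (w : V → V → ℕ) (hw : ∀ u v : V, ¬ G.Adj u v → w u v = 0)
    (C X : Finset V) (hCX : C ⊆ X) (hC : ∀ u ∈ C, ∀ v ∈ X, G.Adj u v → v ∈ C) :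
    ∑ u ∈ C, ∑ v ∈ Cᶜ, w u v ≤ ∑ u ∈ X, ∑ v ∈ Xᶜ, w u v := by
  calc ∑ u ∈ C, ∑ v ∈ Cᶜ, w u v = ∑ u ∈ C, ∑ v ∈ Xᶜ, w u v := by
        refine Finset.sum_congr rfl fun u hu => ?_
        symm
        refine Finset.sum_subset (Finset.compl_subset_compl.2 hCX) ?_
        intro v hv hv'
        refine hw u v fun h => ?_
        simp only [Finset.mem_compl, not_not] at hv hv'
        exact hv (hC u hu v hv' h)
    _ ≤ _ := Finset.sum_le_sum_of_subset hCX

theorem singleton_connected {V : Type} [DecidableEq V] (G : SimpleGraph V) (a : V) :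
    (G.induce (({a} : Finset V) : Set V)).Connected := by
  haveI : Nonempty ↥((({a} : Finset V) : Set V)) := ⟨⟨a, by simp⟩⟩
  refine ⟨?_⟩
  rintro ⟨x, hx⟩ ⟨y, hy⟩
  obtain rfl : x = a := by simpa using hx
  obtain rfl : y = x := by simpa using hy
  exact SimpleGraph.Reachable.refl _

theorem graph_claim_s4 : BreakIntoConnectedPiecesGraphClaim := by
  intro V _ _ G w τ _ hG hsymm hw ⟨X₀, ⟨a, ha⟩, hX₀c, hcut₀⟩
  obtain ⟨X, haX, hXX₀, hXconn, hXcl⟩ := exists_closed_connected G {a} X₀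
    (by simpa using ha) (singleton_connected G a)
  have hcut := (cut_le_of_closed G w hw X X₀ hXX₀ hXcl).trans_lt hcut₀
  obtain ⟨b, hb⟩ := hX₀c
  have hbX : b ∈ Xᶜ := Finset.compl_subset_compl.2 hXX₀ hb
  obtain ⟨D, hbD, hDX, hDconn, hDcl⟩ := exists_closed_connected G {b} Xᶜ
    (by simpa using hbX) (singleton_connected G b)
  have hswap : ∑ u ∈ Xᶜ, ∑ v ∈ Xᶜᶜ, w u v = ∑ u ∈ X, ∑ v ∈ Xᶜ, w u v := by
    rw [compl_compl, Finset.sum_comm]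
    exact Finset.sum_congr rfl fun u _ => Finset.sum_congr rfl fun v _ => hsymm _ _
  have hcutD := (cut_le_of_closed G w hw D Xᶜ hDX hDcl).trans_lt (hswap.trans_lt hcut)
  have hXD : X ⊆ Dᶜ := by
    have := Finset.compl_subset_compl.2 hDX
    rwa [compl_compl] at this
  have haX' : a ∈ X := haX (Finset.mem_singleton_self a)
  obtain ⟨Y, hXY, hYD, hYconn, hYcl⟩ := exists_closed_connected G X Dᶜ hXD hXconn
  have hY : Y = Dᶜ := by
    refine Finset.Subset.antisymm hYD ?_
    intro z hz
    by_contra hzY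
    obtain ⟨p⟩ := hG.preconnected z a
    obtain ⟨d, -, hd1, hd2⟩ := p.exists_boundary_dart {x | x ∈ Dᶜ ∧ x ∉ Y} ⟨hz, hzY⟩
      (fun h => h.2 (hXY haX'))
    obtain ⟨h1, h2⟩ := hd1
    have hadj := d.adj
    by_cases h3 : d.snd ∈ Y
    · exact h2 (hYcl _ h3 _ h1 hadj.symm)
    · have h4 : d.snd ∈ D := by
        by_contra h5
        exact hd2 ⟨Finset.mem_compl.2 h5, h3⟩
      have h6 : d.fst ∈ Xᶜ := Finset.mem_compl.2 fun h => h2 (hXY h)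
      exact (Finset.mem_compl.1 h1) (hDcl _ h4 _ h6 hadj.symm)
  exact ⟨D, ⟨b, hbD (Finset.mem_singleton_self b)⟩, ⟨a, hXD haX'⟩, hcutD, hDconn, hY ▸ hYconn⟩

theorem gridAdj_symm {u v : ℤ × ℤ} (h : TA.gridAdj u v) : TA.gridAdj v u := by
  obtain ⟨a, b⟩ := u
  obtain ⟨c, d⟩ := v
  simp only [TA.gridAdj, Finset.mem_insert, Finset.mem_singleton, Prod.mk_sub_mk,
    Prod.mk.injEq] at h ⊢
  omega

theorem gridAdj_irrefl (u : ℤ × ℤ) : ¬ TA.gridAdj u u := by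
  unfold TA.gridAdj
  rw [sub_self]
  decide

/-- The bond graph's underlying adjacency graph on the tiles of an assembly. -/
def tileGraph {S : Type} (γ : TA.PosAsm S) : SimpleGraph (TA.dom γ) where
  Adj u v := TA.gridAdj u.1 v.1
  symm := ⟨fun _ _ h => gridAdj_symm h⟩
  loopless := ⟨fun u => gridAdj_irrefl u.1⟩

theorem edgeW_symm {S : Type} (Γ : TA.System S) (γ : TA.PosAsm S) (u v : ℤ × ℤ) :
    TA.edgeW Γ γ u v = TA.edgeW Γ γ v u := by
  obtain ⟨a, b⟩ := u
  obtain ⟨c, d⟩ := v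
  unfold TA.edgeW
  rcases γ.tiles (a, b) with _ | s <;> rcases γ.tiles (c, d) with _ | t <;> try rfl
  simp only [Prod.mk_add_mk, Prod.mk.injEq]
  split_ifs <;> first | rfl | omega

theorem edgeW_eq_zero {S : Type} (Γ : TA.System S) (γ : TA.PosAsm S) (u v : ℤ × ℤ)
    (h : ¬ TA.gridAdj u v) : TA.edgeW Γ γ u v = 0 := by
  obtain ⟨a, b⟩ := u
  obtain ⟨c, d⟩ := v
  simp only [TA.gridAdj, Finset.mem_insert, Finset.mem_singleton, Prod.mk_sub_mk,
    Prod.mk.injEq] at h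
  unfold TA.edgeW
  rcases γ.tiles (a, b) with _ | s <;> rcases γ.tiles (c, d) with _ | t <;> try rfl
  simp only [Prod.mk_add_mk, Prod.mk.injEq]
  split_ifs <;> first | rfl | omega

theorem crossW_image {S : Type} (Γ : TA.System S) (γ : TA.PosAsm S) (X Y : Finset (TA.dom γ)) :
    TA.crossW Γ γ (Subtype.val '' (X : Set (TA.dom γ))) (Subtype.val '' (Y : Set (TA.dom γ)))
      = ∑ u ∈ X, ∑ v ∈ Y, TA.edgeW Γ γ u.1 v.1 := by
  unfold TA.crossW
  rw [finsum_mem_image Subtype.val_injective.injOn, finsum_mem_coe_finset]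
  refine Finset.sum_congr rfl fun u _ => ?_
  rw [finsum_mem_image Subtype.val_injective.injOn, finsum_mem_coe_finset]

open Classical in
/-- Restriction of an assembly to a set of positions. -/
noncomputable def restrictAsm {S : Type} (γ : TA.PosAsm S) (A : Set (ℤ × ℤ)) : TA.PosAsm S where
  tiles x := if x ∈ A then γ.tiles x else none
  finite := by
    apply γ.finite.subset
    intro x hx
    simp only [Set.mem_setOf_eq] at hx ⊢
    intro h
    apply hx
    simp [h]

theorem dom_restrictAsm {S : Type} (γ : TA.PosAsm S) (X : Set (TA.dom γ)) :
    TA.dom (restrictAsm γ (Subtype.val '' X)) = Subtype.val '' X := by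
  ext x
  constructor
  · intro h
    by_contra hx
    exact h (if_neg hx)
  · intro h
    have h' : x ∈ TA.dom γ := by
      obtain ⟨y, -, rfl⟩ := h
      exact y.2
    show (restrictAsm γ (Subtype.val '' X)).tiles x ≠ none
    rw [show (restrictAsm γ (Subtype.val '' X)).tiles x = γ.tiles x from if_pos h]
    exact h'

theorem posAsm_ext {S : Type} {α β : TA.PosAsm S} (h : α.tiles = β.tiles) : α = β := by
  cases α
  cases β
  cases h
  rfl

theorem restrictAsm_connected {S : Type} (γ : TA.PosAsm S) (X : Set (TA.dom γ))
    (h : ((tileGraph γ).induce X).Connected) :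
    TA.IsConnected (restrictAsm γ (Subtype.val '' X)) := by
  unfold TA.IsConnected
  rw [dom_restrictAsm]
  rintro _ ⟨u, hu, rfl⟩ _ ⟨v, hv, rfl⟩
  have hr := (SimpleGraph.reachable_iff_reflTransGen _ _).1 (h.preconnected ⟨u, hu⟩ ⟨v, hv⟩)
  exact Relation.ReflTransGen.lift (fun x : X => x.1.1)
    (fun a b hab => ⟨⟨a.1, a.2, rfl⟩, ⟨b.1, b.2, rfl⟩, hab⟩) _ _ hr

theorem tileGraph_connected {S : Type} (γ : TA.PosAsm S) (h : TA.IsConnected γ)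
    (hne : (TA.dom γ).Nonempty) : (tileGraph γ).Connected := by
  haveI : Nonempty (TA.dom γ) := hne.to_subtype
  refine ⟨?_⟩
  rintro ⟨u, hu⟩ ⟨v, hv⟩
  have key : ∀ x, Relation.ReflTransGen
      (fun x y => x ∈ TA.dom γ ∧ y ∈ TA.dom γ ∧ TA.gridAdj x y) u x →
      ∀ hx : x ∈ TA.dom γ, (tileGraph γ).Reachable ⟨u, hu⟩ ⟨x, hx⟩ := by
    intro x hx
    induction hx with
    | refl => intro _; exact SimpleGraph.Reachable.refl _
    | tail _ hbc ih =>
      intro hc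
      refine (ih hbc.1).trans (SimpleGraph.Adj.reachable ?_)
      exact hbc.2.2
  exact key v (h u hu v hv) hv

theorem ta_claim : BreakIntoConnectedPiecesTAClaim := by
  classical
  intro S Γ hτ γ hγ ⟨α, β, hdisj, hunion, hα, hβ, hcut⟩
  haveI : Fintype (TA.dom γ) := Set.Finite.fintype γ.finite
  have hdom : TA.dom γ = TA.dom α ∪ TA.dom β := by
    rw [hunion]
    ext x
    simp only [TA.dom, TA.union, Set.mem_setOf_eq, Set.mem_union]
    rcases α.tiles x with _ | a <;> simp
  set X : Finset (TA.dom γ) := Finset.univ.filter fun x => x.1 ∈ TA.dom α with hX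
  have hXα : Subtype.val '' (X : Set (TA.dom γ)) = TA.dom α := by
    ext x
    constructor
    · rintro ⟨y, hy, rfl⟩
      simpa [hX] using hy
    · intro hx
      exact ⟨⟨x, hdom ▸ Or.inl hx⟩, by simpa [hX] using hx, rfl⟩
  have hXβ : Subtype.val '' ((Xᶜ : Finset (TA.dom γ)) : Set (TA.dom γ)) = TA.dom β := by
    ext x
    constructor
    · rintro ⟨y, hy, rfl⟩
      have h1 : y.1 ∉ TA.dom α := by simpa [hX] using hy
      have h2 : y.1 ∈ TA.dom α ∪ TA.dom β := hdom ▸ y.2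
      exact h2.resolve_left h1
    · intro hx
      have h1 : x ∉ TA.dom α := fun h => Set.disjoint_left.1 hdisj h hx
      exact ⟨⟨x, hdom ▸ Or.inr hx⟩, by simpa [hX] using h1, rfl⟩
  have hne : (TA.dom γ).Nonempty := by
    rw [hdom]
    exact hα.inl
  have hcut' : ∑ u ∈ X, ∑ v ∈ Xᶜ, TA.edgeW Γ γ u.1 v.1 < Γ.τ := by
    rw [← crossW_image, hXα, hXβ]
    exact hcut
  rw [← hXα] at hα
  rw [← hXβ] at hβ
  obtain ⟨Z, hZ, hZc, hZcut, hZ1, hZ2⟩ := graph_claim_s4 (TA.dom γ) (tileGraph γ)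
    (fun u v => TA.edgeW Γ γ u.1 v.1) Γ.τ hτ (tileGraph_connected γ hγ hne)
    (fun u v => edgeW_symm Γ γ u.1 v.1) (fun u v h => edgeW_eq_zero Γ γ u.1 v.1 h)
    ⟨X, by simpa using hα, Finset.coe_nonempty.1 (Set.image_nonempty.1 hβ), hcut'⟩
  refine ⟨restrictAsm γ (Subtype.val '' (Z : Set (TA.dom γ))),
    restrictAsm γ (Subtype.val '' ((Zᶜ : Finset (TA.dom γ)) : Set (TA.dom γ))),
    ⟨?_, ?_, ?_, ?_, ?_⟩, restrictAsm_connected γ _ hZ1, restrictAsm_connected γ _ hZ2⟩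
  · rw [dom_restrictAsm, dom_restrictAsm, Set.disjoint_image_iff Subtype.val_injective,
      Finset.disjoint_coe]
    exact disjoint_compl_right
  · apply posAsm_ext
    funext x
    by_cases hx : x ∈ TA.dom γ
    · by_cases hz : (⟨x, hx⟩ : TA.dom γ) ∈ Z
      · have h : ∃ s, γ.tiles x = some s := Option.ne_none_iff_exists'.1 hx
        obtain ⟨s, hs⟩ := h
        simp [TA.union, restrictAsm, hx, hz, hs]
      · simp [TA.union, restrictAsm, hx, hz]
    · have hn : γ.tiles x = none := by
        by_contra h
        exact hx h
      simp [TA.union, restrictAsm, hn]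
  · rw [dom_restrictAsm]
    exact (Finset.coe_nonempty.2 hZ).image _
  · rw [dom_restrictAsm]
    exact (Finset.coe_nonempty.2 hZc).image _
  · rw [dom_restrictAsm, dom_restrictAsm, crossW_image]
    exact hZcut

end Helpers

theorem breakable_into_connected_pieces :
    BreakIntoConnectedPiecesGraphClaim ∧ BreakIntoConnectedPiecesTAClaim :=
  ⟨graph_claim_s4, ta_claim⟩
end
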